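/- Let (Ω, F, P) be a probability space, n_max ≥ 2 an integer, u > 0 a real, and N : Ω → ℕ a random variable with P(1 ≤ N ≤ n_max) = 1. Let m = E[N] (so m ≥ 1). If (1/m) · (1 − 1/m)^{m−1} > 1/n_max, then u/(2 n_max) < (1/2) · sup_{v ∈ [0,u]} ( v · E[ (1 − v/u)^{N−1} ] ). -/

import Mathlib

open MeasureTheory

/-!
Let every user hop over `v = u / m` sub-bands. Since `k ↦ (1 - 1 / m) ^ (k - 1)` is convex,
Jensen's inequality gives `E[(1 - 1 / m) ^ (N - 1)] ≥ (1 - 1 / m) ^ (m - 1)`, so this single choice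
of `v` already yields at least `u * ((1 / m) * (1 - 1 / m) ^ (m - 1)) > u / n_max`.
-/

section

variable {Ω : Type*} [MeasurableSpace Ω] {P : Measure Ω} {X : Ω → ℝ} {q u m : ℝ}

lemma integrable_rpow_of_nonneg_of_le_one [IsFiniteMeasure P] (hq0 : 0 ≤ q) (hq1 : q ≤ 1)
    (hX : AEMeasurable X P) (hX0 : ∀ᵐ ω ∂P, 0 ≤ X ω) :
    Integrable (fun ω => q ^ X ω) P := by
  refine .of_mem_Icc 0 1 (hX.const_pow q) ?_
  filter_upwards [hX0] with ω hω
  exact ⟨Real.rpow_nonneg hq0 _, Real.rpow_le_one hq0 hq1 hω⟩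

lemma rpow_integral_le_integral_rpow [IsProbabilityMeasure P] (hq : 0 ≤ q)
    (hX : Integrable X P) (hX0 : ∀ᵐ ω ∂P, 0 ≤ X ω) (hqX : Integrable (fun ω => q ^ X ω) P) :
    q ^ (∫ ω, X ω ∂P) ≤ ∫ ω, q ^ X ω ∂P := by
  rcases hq.eq_or_lt with rfl | hq
  · -- `x ↦ 0 ^ x` is discontinuous at `0`, so `ConvexOn.map_integral_le` does not apply.
    rcases eq_or_ne (∫ ω, X ω ∂P) 0 with hmean | hmean
    · have hX_zero : X =ᵐ[P] 0 := (integral_eq_zero_iff_of_nonneg_ae hX0 hX).1 hmean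
      have hpow_one : (fun ω => (0 : ℝ) ^ X ω) =ᵐ[P] fun _ => 1 := by
        filter_upwards [hX_zero] with ω hω
        simp [hω]
      simp [hmean, integral_congr_ae hpow_one]
    · rw [Real.zero_rpow hmean]
      exact integral_nonneg fun ω => Real.rpow_nonneg le_rfl _
  · exact (convexOn_rpow_left hq).map_integral_le (Real.continuous_const_rpow hq.ne').continuousOn
      isClosed_univ (.of_forall fun _ => Set.mem_univ _) hX hqX

lemma integral_rpow_natCast_sub_one {N : Ω → ℕ} (hN : ∀ᵐ ω ∂P, 1 ≤ N ω) :
    ∫ ω, q ^ ((N ω : ℝ) - 1) ∂P = ∫ ω, q ^ (N ω - 1) ∂P := by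
  refine integral_congr_ae ?_
  filter_upwards [hN] with ω hω
  rw [← Nat.cast_pred hω, Real.rpow_natCast]

lemma bddAbove_image_mul_integral_rpow [IsProbabilityMeasure P] (hu : 0 < u)
    (hX : ∀ᵐ ω ∂P, 1 ≤ X ω) :
    BddAbove ((fun v : ℝ => v * ∫ ω, (1 - v / u) ^ (X ω - 1) ∂P) '' Set.Icc 0 u) := by
  refine ⟨u, ?_⟩
  rintro _ ⟨v, ⟨hv0, hvu⟩, rfl⟩
  have hq0 : 0 ≤ 1 - v / u := sub_nonneg.2 ((div_le_one hu).2 hvu)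
  have hq1 : 1 - v / u ≤ 1 := sub_le_self _ (div_nonneg hv0 hu.le)
  have hmean : ∫ ω, (1 - v / u) ^ (X ω - 1) ∂P ≤ 1 := by
    have h := integral_mono_of_nonneg (.of_forall fun ω => Real.rpow_nonneg hq0 (X ω - 1))
      (integrable_const (1 : ℝ))
      (hX.mono fun ω hω => Real.rpow_le_one hq0 hq1 (sub_nonneg.2 hω))
    simpa using h
  exact (mul_le_of_le_one_right hv0 hmean).trans hvu

lemma mul_rpow_le_sSup_image_mul_integral_rpow [IsProbabilityMeasure P] (hu : 0 < u)
    (hX : Integrable X P) (hX1 : ∀ᵐ ω ∂P, 1 ≤ X ω) (hm : m = ∫ ω, X ω ∂P) :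
    u * (1 / m * (1 - 1 / m) ^ (m - 1)) ≤
      sSup ((fun v : ℝ => v * ∫ ω, (1 - v / u) ^ (X ω - 1) ∂P) '' Set.Icc 0 u) := by
  have hm1 : 1 ≤ m := by
    simpa [← hm] using integral_mono_ae (integrable_const 1) hX hX1
  have hm0 : 0 < m := one_pos.trans_le hm1
  have hq0 : 0 ≤ 1 - 1 / m := sub_nonneg.2 ((div_le_one hm0).2 hm1)
  have hq1 : 1 - 1 / m ≤ 1 := sub_le_self _ (by positivity)
  have hsub : Integrable (fun ω => X ω - 1) P := hX.sub (integrable_const 1)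
  have hsub0 : ∀ᵐ ω ∂P, 0 ≤ X ω - 1 := hX1.mono fun _ => sub_nonneg.2
  have hmean : ∫ ω, (X ω - 1) ∂P = m - 1 := by
    simp [integral_sub hX (integrable_const 1), hm]
  have hjensen : (1 - 1 / m) ^ (m - 1) ≤ ∫ ω, (1 - 1 / m) ^ (X ω - 1) ∂P :=
    hmean ▸ rpow_integral_le_integral_rpow hq0 hsub hsub0
      (integrable_rpow_of_nonneg_of_le_one hq0 hq1 hsub.aemeasurable hsub0)
  have hdiv : u / m / u = 1 / m := by field_simp
  calc u * (1 / m * (1 - 1 / m) ^ (m - 1))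
      ≤ u * (1 / m * ∫ ω, (1 - 1 / m) ^ (X ω - 1) ∂P) := by gcongr
    _ = u / m * ∫ ω, (1 - u / m / u) ^ (X ω - 1) ∂P := by rw [hdiv]; ring
    _ ≤ _ := le_csSup (bddAbove_image_mul_integral_rpow hu hX1)
        (Set.mem_image_of_mem _ ⟨by positivity, div_le_self hu.le hm1⟩)

theorem prop2_FD_lt_FH_general [IsProbabilityMeasure P] (hu : 0 < u)
    (hX : Integrable X P) (hX1 : ∀ᵐ ω ∂P, 1 ≤ X ω) (hm : m = ∫ ω, X ω ∂P)
    {r : ℝ} (hr : r < 1 / m * (1 - 1 / m) ^ (m - 1)) :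
    u / 2 * r <
      1 / 2 * sSup ((fun v : ℝ => v * ∫ ω, (1 - v / u) ^ (X ω - 1) ∂P) '' Set.Icc 0 u) :=
  calc u / 2 * r < u / 2 * (1 / m * (1 - 1 / m) ^ (m - 1)) := by gcongr
    _ = 1 / 2 * (u * (1 / m * (1 - 1 / m) ^ (m - 1))) := by ring
    _ ≤ _ := by gcongr; exact mul_rpow_le_sSup_image_mul_integral_rpow hu hX hX1 hm

end

/-- **Proposition 2.**  Let `N` be the random number of active users, with `1 ≤ N ≤ n_max`
almost surely, and `m = E[N]`.  If `(1/m)(1 - 1/m)^(m-1) > 1/n_max`, then the average minimum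
multiplexing gain per user of frequency division, `u/(2 n_max)`, is strictly smaller than that
of robust frequency hopping, `(1/2) sup_{v ∈ [0,u]} v · E[(1 - v/u)^(N-1)]`. -/
theorem prop2_FD_lt_FH
    {Ω : Type*} [MeasurableSpace Ω] (P : Measure Ω) [IsProbabilityMeasure P]
    (nmax : ℕ) (hnmax : 2 ≤ nmax) (u : ℝ) (hu : 0 < u)
    (N : Ω → ℕ) (hNmeas : Measurable N)
    (hNbound : ∀ᵐ ω ∂P, 1 ≤ N ω ∧ N ω ≤ nmax)
    (m : ℝ) (hm : m = ∫ ω, (N ω : ℝ) ∂P)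
    (hcond : (1 / m) * (1 - 1 / m) ^ (m - 1) > 1 / (nmax : ℝ)) :
    u / (2 * nmax) <
      (1 / 2) * sSup ((fun v : ℝ =>
        v * ∫ ω, (1 - v / u) ^ (N ω - 1) ∂P) '' Set.Icc 0 u) := by
  have hN1 : ∀ᵐ ω ∂P, 1 ≤ N ω := hNbound.mono fun _ => And.left
  have hN : Integrable (fun ω => (N ω : ℝ)) P :=
    .of_mem_Icc 1 nmax (by fun_prop) (by simpa using hNbound)
  simpa only [integral_rpow_natCast_sub_one hN1, div_mul_div_comm, mul_one] using
    prop2_FD_lt_FH_general hu hN (by simpa using hN1) hm hcond
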